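/- Let k ≥ 2 and let G be a finite simple graph with maximum degree at most 2 such that exactly one connected component of G is a path with at least k−1 vertices. If s(G, P_k) ≤ k, then no connected component of G is a cycle with more than k vertices, and the unique path component of G with at least k−1 vertices has exactly s(G, P_k) + k − 1 vertices. -/

import Mathlib

open SimpleGraph

/-- `SameDeck G G' k`: `G` and `G'` have the same `k`-deck, i.e. for every simple graph `H`
on `k` vertices, the number of `k`-element vertex subsets of `G` inducing a subgraph
isomorphic to `H` equals the corresponding number for `G'`. -/
def SameDeck {V W : Type*} [Fintype V] [Fintype W]
    (G : SimpleGraph V) (G' : SimpleGraph W) (k : ℕ) : Prop :=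
  ∀ H : SimpleGraph (Fin k),
    Set.ncard {s : Finset V | s.card = k ∧ Nonempty ((G.induce (↑s : Set V)) ≃g H)} =
    Set.ncard {s : Finset W | s.card = k ∧ Nonempty ((G'.induce (↑s : Set W)) ≃g H)}

/-- `copies G H = s(G,H)`, the number of vertex subsets of `G` whose induced subgraph is
isomorphic to `H`. -/
noncomputable def copies {V W : Type*} [Fintype V]
    (G : SimpleGraph V) (H : SimpleGraph W) : ℕ :=
  Set.ncard {s : Finset V | Nonempty ((G.induce (↑s : Set V)) ≃g H)}

/-- The connected component `c` of `G` is a path on `m` vertices. -/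
def CompIsPath {V : Type*} (G : SimpleGraph V) (c : G.ConnectedComponent) (m : ℕ) : Prop :=
  Nonempty ((G.induce c.supp) ≃g pathGraph m)

/-- The connected component `c` of `G` is a cycle on `m` vertices (`m ≥ 3`). -/
def CompIsCycle {V : Type*} (G : SimpleGraph V) (c : G.ConnectedComponent) (m : ℕ) : Prop :=
  3 ≤ m ∧ Nonempty ((G.induce c.supp) ≃g cycleGraph m)

/-- A linear forest: every connected component is a path. -/
def IsLinearForest {V : Type*} (G : SimpleGraph V) : Prop :=
  ∀ c : G.ConnectedComponent, ∃ m : ℕ, CompIsPath G c m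

/-!
Every copy of the connected graph `P_k` lies in a single component, so `s(G, P_k)` is the sum of the
counts over the components. As `Δ(G) ≤ 2`, these are paths and cycles. A cycle with more than `k`
vertices alone contributes more than `k` copies, which excludes it; the remaining cycles and the
paths with fewer than `k - 1` vertices contribute none, so `s(G, P_k) = m + 1 - k`, where `m` is the
order of the one remaining path.
-/

section Copies

variable {V V' W : Type*} {G : SimpleGraph V} {H : SimpleGraph W}

lemma nonempty_induce_iso_iff_exists_range_eq {S : Set V} :
    Nonempty (G.induce S ≃g H) ↔ ∃ f : H ↪g G, Set.range f = S := by
  constructor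
  · rintro ⟨e⟩
    refine ⟨(Embedding.induce S).comp e.symm.toEmbedding, ?_⟩
    exact (EquivLike.range_comp Subtype.val e.symm).trans Subtype.range_coe
  · rintro ⟨f, rfl⟩
    exact ⟨f.isoInduceRange.symm⟩

lemma exists_range_subset_supp (hH : H.Connected) (f : H ↪g G) :
    ∃ c : G.ConnectedComponent, Set.range f ⊆ c.supp := by
  obtain ⟨w⟩ := hH.nonempty
  refine ⟨G.connectedComponentMk (f w), ?_⟩
  rintro _ ⟨x, rfl⟩
  exact ConnectedComponent.sound ((hH.preconnected x w).map f.toHom)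

lemma range_embedding_eq_iUnion_supp (G : SimpleGraph V) (hH : H.Connected) :
    (Set.range fun f : H ↪g G ↦ Set.range f) =
      ⋃ c : G.ConnectedComponent,
        (Subtype.val '' ·) '' Set.range fun f : H ↪g G.induce c.supp ↦ Set.range f := by
  ext S
  simp only [Set.mem_range, Set.mem_iUnion, Set.mem_image, exists_exists_eq_and]
  constructor
  · rintro ⟨f, rfl⟩
    obtain ⟨c, hc⟩ := exists_range_subset_supp hH f
    let g : H ↪g G.induce c.supp :=
      RelEmbedding.codRestrict c.supp f fun x ↦ hc (Set.mem_range_self x)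
    exact ⟨c, g, (Set.range_comp Subtype.val g).symm⟩
  · rintro ⟨c, g, rfl⟩
    exact ⟨(Embedding.induce c.supp).comp g, Set.range_comp Subtype.val g⟩

variable [Fintype V]

lemma copies_eq_ncard_range (G : SimpleGraph V) (H : SimpleGraph W) :
    copies G H = (Set.range fun f : H ↪g G ↦ Set.range f).ncard := by
  rw [copies, ← Set.ncard_image_of_injective _ Finset.coe_injective]
  congr 1
  ext S
  lift S to Finset V using S.toFinite
  simpa using nonempty_induce_iso_iff_exists_range_eq

lemma copies_eq_zero [IsEmpty (H ↪g G)] : copies G H = 0 := by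
  rw [copies_eq_ncard_range, Set.range_eq_empty, Set.ncard_empty]

lemma copies_le_of_embedding [Fintype V'] {G' : SimpleGraph V'} (φ : G ↪g G')
    (H : SimpleGraph W) : copies G H ≤ copies G' H := by
  rw [copies_eq_ncard_range, copies_eq_ncard_range]
  refine Set.ncard_le_ncard_of_injOn (φ '' ·) ?_ φ.injective.image_injective.injOn
  rintro _ ⟨f, rfl⟩
  exact ⟨φ.comp f, Set.range_comp φ f⟩

lemma copies_congr [Fintype V'] {G' : SimpleGraph V'} (e : G ≃g G') (H : SimpleGraph W) :
    copies G H = copies G' H :=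
  (copies_le_of_embedding e.toEmbedding H).antisymm (copies_le_of_embedding e.symm.toEmbedding H)

theorem copies_eq_finsum_copies_induce_supp (G : SimpleGraph V)
    [∀ c : G.ConnectedComponent, Fintype c.supp] (hH : H.Connected) :
    copies G H = ∑ᶠ c : G.ConnectedComponent, copies (G.induce c.supp) H := by
  rw [copies_eq_ncard_range, range_embedding_eq_iUnion_supp G hH,
    Set.ncard_iUnion_of_finite fun _ ↦ Set.toFinite _]
  · simp only [Set.ncard_image_of_injective _ Subtype.val_injective.image_injective,
      copies_eq_ncard_range]
  · intro c d hcd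
    refine Set.disjoint_left.mpr ?_
    rintro _ ⟨_, ⟨f, rfl⟩, rfl⟩ ⟨_, ⟨g, rfl⟩, hgf⟩
    obtain ⟨w⟩ := hH.nonempty
    have hfw : (f w : V) ∈ Subtype.val '' Set.range f := ⟨f w, ⟨w, rfl⟩, rfl⟩
    obtain ⟨x, -, hx⟩ := (Set.ext_iff.mp hgf (f w)).mpr hfw
    exact hcd (ConnectedComponent.eq_of_common_vertex (f w).2 (hx ▸ x.2))

end Copies

section PathInPath

variable {n k : ℕ}

lemma val_le_val_add_length_of_walk_pathGraph {u v : Fin n} (p : (pathGraph n).Walk u v) :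
    (v : ℕ) ≤ u + p.length := by
  induction p with
  | nil => simp
  | cons h p ih =>
    rw [pathGraph_adj] at h
    rw [Walk.length_cons]
    omega

-- A connected graph on `k` vertices has diameter less than `k`, so its image lies in an interval
-- of length `k`, which it then fills.
lemma exists_range_eq_preimage_Ico {W : Type*} [Fintype W] {H : SimpleGraph W} (hH : H.Connected)
    (f : H →g pathGraph n) (hf : Function.Injective f) :
    ∃ a, a + Fintype.card W ≤ n ∧ Set.range f = Fin.val ⁻¹' Set.Ico a (a + Fintype.card W) := by
  have := hH.nonempty
  obtain ⟨w, hw⟩ := Finite.exists_min f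
  have hsub : Finset.univ.image (fun x ↦ (f x : ℕ)) ⊆
      Finset.Ico (f w : ℕ) (f w + Fintype.card W) := by
    simp only [Finset.image_subset_iff, Finset.mem_Ico]
    intro x _
    obtain ⟨p, hp⟩ := hH.exists_isPath w x
    have hlen := val_le_val_add_length_of_walk_pathGraph (p.map f)
    rw [Walk.length_map] at hlen
    exact ⟨hw x, hlen.trans_lt (Nat.add_lt_add_left hp.length_lt _)⟩
  have hcard : (Finset.univ.image fun x ↦ (f x : ℕ)).card = Fintype.card W :=
    Finset.card_image_of_injective _ (Fin.val_injective.comp hf)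
  have heq := Finset.eq_of_subset_of_card_le hsub (by rw [Nat.card_Ico, hcard]; omega)
  have hmem (y : ℕ) : (∃ x, (f x : ℕ) = y) ↔ f w ≤ y ∧ y < f w + Fintype.card W := by
    simpa using Finset.ext_iff.mp heq y
  refine ⟨f w, ?_, ?_⟩
  · have hpos : 0 < Fintype.card W := Fintype.card_pos
    obtain ⟨x, hx⟩ := (hmem (f w + Fintype.card W - 1)).mpr (by omega)
    have := (f x).isLt
    omega
  · ext y
    simpa [Fin.ext_iff] using hmem y

lemma exists_pathGraph_embedding_range_eq_preimage_Ico {a : ℕ} (h : a + k ≤ n) :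
    ∃ f : pathGraph k ↪g pathGraph n, Set.range f = Fin.val ⁻¹' Set.Ico a (a + k) := by
  let f : pathGraph k ↪g pathGraph n :=
    { toEmbedding := (Fin.natAddEmb a).trans (Fin.castLEEmb h)
      map_rel_iff' := by simp [pathGraph_adj, add_assoc] }
  refine ⟨f, Set.ext fun y ↦ ⟨?_, ?_⟩⟩
  · rintro ⟨i, rfl⟩
    exact ⟨Nat.le_add_right a i, Nat.add_lt_add_left i.isLt a⟩
  · rintro ⟨hay, hyk⟩
    exact ⟨⟨y - a, by omega⟩, Fin.ext (Nat.add_sub_cancel' hay)⟩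

lemma pathGraph_connected_of_pos (hk : 0 < k) : (pathGraph k).Connected :=
  have := Fin.pos_iff_nonempty.mp hk
  ⟨pathGraph_preconnected k⟩

theorem copies_pathGraph_pathGraph (n : ℕ) (hk : 0 < k) :
    copies (pathGraph n) (pathGraph k) = n + 1 - k := by
  have hrange : (Set.range fun f : pathGraph k ↪g pathGraph n ↦ Set.range f) =
      (fun a ↦ Fin.val ⁻¹' Set.Ico a (a + k)) '' Set.Iio (n + 1 - k) := by
    ext S
    constructor
    · rintro ⟨f, rfl⟩
      obtain ⟨a, han, ha⟩ :=
        exists_range_eq_preimage_Ico (pathGraph_connected_of_pos hk) f.toHom f.injective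
      rw [Fintype.card_fin] at han ha
      exact ⟨a, by simp only [Set.mem_Iio]; omega, ha.symm⟩
    · rintro ⟨a, ha, rfl⟩
      rw [Set.mem_Iio] at ha
      exact exists_pathGraph_embedding_range_eq_preimage_Ico (by omega)
  have hinj : Set.InjOn (fun a ↦ (Fin.val ⁻¹' Set.Ico a (a + k) : Set (Fin n)))
      (Set.Iio (n + 1 - k)) := by
    intro a ha b hb hab
    simp only [Set.mem_Iio] at ha hb
    have haS := Set.ext_iff.mp hab ⟨a, by omega⟩
    have hbS := Set.ext_iff.mp hab ⟨b, by omega⟩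
    simp only [Set.mem_preimage, Set.mem_Ico] at haS hbS
    omega
  rw [copies_eq_ncard_range, hrange, hinj.ncard_image, ← Finset.coe_Iio, Set.ncard_coe_finset,
    Nat.card_Iio]

end PathInPath

section PathInCycle

variable {n k : ℕ}

/-- The arc of `k` consecutive vertices of `cycleGraph n` that starts at `i`, all of `Fin n` when
`n ≤ k`. -/
def cycleArc (k : ℕ) (i : Fin n) : Set (Fin n) :=
  {x | (x - i).val < k}

lemma val_castLE_sub_castLE_eq_one_iff (h : k < n) (a b : Fin k) :
    (Fin.castLE h.le a - Fin.castLE h.le b).val = 1 ↔ b.val + 1 = a.val := by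
  rcases le_or_gt b a with hba | hab
  · rw [Fin.sub_val_of_le (by simpa using hba), Fin.val_castLE, Fin.val_castLE]
    omega
  · rw [Fin.coe_sub_iff_lt.mpr (by simpa using hab), Fin.val_castLE, Fin.val_castLE]
    omega

lemma exists_embedding_range_eq_cycleArc (h : k < n) (i : Fin n) :
    ∃ f : pathGraph k ↪g cycleGraph n, Set.range f = cycleArc k i := by
  have : NeZero n := i.neZero
  let f : pathGraph k ↪g cycleGraph n :=
    { toFun := fun j ↦ Fin.castLE h.le j + i
      inj' := (add_left_injective i).comp (Fin.castLE_injective h.le)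
      map_rel_iff' := by
        simp [cycleGraph_adj', pathGraph_adj, val_castLE_sub_castLE_eq_one_iff h, or_comm] }
  refine ⟨f, Set.ext fun x ↦ ⟨?_, fun hx ↦ ⟨⟨(x - i).val, hx⟩, sub_add_cancel x i⟩⟩⟩
  rintro ⟨j, rfl⟩
  simp [f, cycleArc]

-- The start `i` of an arc is its only vertex whose predecessor `i - 1` lies outside.
lemma cycleArc_injective (hk : 0 < k) (h : k < n) :
    Function.Injective (cycleArc k : Fin n → Set (Fin n)) := by
  obtain ⟨m, rfl⟩ := Nat.exists_eq_add_one_of_ne_zero (Nat.ne_zero_of_lt h)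
  intro i j hij
  have hi : i ∈ cycleArc k j := hij ▸ (by simpa [cycleArc] using hk : i ∈ cycleArc k i)
  have hpred : i - 1 ∉ cycleArc k j := hij ▸ (by
    simpa [cycleArc, sub_right_comm] using Nat.le_of_lt_succ h : i - 1 ∉ cycleArc k i)
  by_contra hne
  have hval : (i - j - 1).val = (i - j).val - 1 :=
    Fin.val_sub_one_of_ne_zero (sub_ne_zero.mpr hne)
  refine hpred ?_
  change (i - 1 - j).val < k
  rw [sub_right_comm, hval]
  exact (Nat.sub_le _ _).trans_lt hi

theorem le_copies_cycleGraph_pathGraph (hk : 0 < k) (h : k < n) :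
    n ≤ copies (cycleGraph n) (pathGraph k) := by
  rw [copies_eq_ncard_range]
  calc n = (Set.range (cycleArc k : Fin n → Set (Fin n))).ncard := by
        rw [← Set.image_univ, Set.ncard_image_of_injective _ (cycleArc_injective hk h),
          Set.ncard_univ, Nat.card_fin]
    _ ≤ _ := Set.ncard_le_ncard <| by
        rintro _ ⟨i, rfl⟩
        exact exists_embedding_range_eq_cycleArc h i

lemma isEmpty_pathGraph_embedding_cycleGraph (hn : 3 ≤ n) (h : n ≤ k) :
    IsEmpty (pathGraph k ↪g cycleGraph n) := by
  refine ⟨fun f ↦ ?_⟩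
  obtain rfl : k = n := h.antisymm' (by simpa using Fintype.card_le_of_injective f f.injective)
  obtain ⟨m, rfl⟩ := Nat.exists_eq_add_of_le' hn
  have hsub : (cycleGraph (m + 3)).neighborFinset (f 0) ⊆ {f 1} := by
    intro y hy
    obtain ⟨x, rfl⟩ := Finite.surjective_of_injective f.injective y
    rw [mem_neighborFinset, f.map_adj_iff, pathGraph_adj] at hy
    have hx : x = 1 := by
      ext
      simpa [eq_comm] using hy
    rw [hx, Finset.mem_singleton]
  have hdeg : (cycleGraph (m + 3)).degree (f 0) ≤ 1 := Finset.card_le_card hsub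
  rw [cycleGraph_degree_three_le] at hdeg
  omega

theorem copies_cycleGraph_pathGraph_eq_zero (hn : 3 ≤ n) (h : n ≤ k) :
    copies (cycleGraph n) (pathGraph k) = 0 :=
  have := isEmpty_pathGraph_embedding_cycleGraph hn h
  copies_eq_zero

end PathInCycle

section MaxDegreeTwo

variable {V : Type*} {G : SimpleGraph V}

lemma neighborSet_eq_pair [Finite V] {v a b : V} (hdeg : (G.neighborSet v).ncard ≤ 2)
    (ha : G.Adj v a) (hb : G.Adj v b) (hab : a ≠ b) : G.neighborSet v = {a, b} := by
  have hsub : {a, b} ⊆ G.neighborSet v := by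
    rintro x (rfl | rfl)
    exacts [ha, hb]
  exact (Set.eq_of_subset_of_ncard_le hsub (by rwa [Set.ncard_pair hab])).symm

lemma mem_support_of_adj_start {u v w : V} {p : G.Walk u v} (hp : p.IsPath)
    (hmax : ∀ (u' v' : V) (q : G.Walk u' v'), q.IsPath → q.length ≤ p.length)
    (h : G.Adj u w) : w ∈ p.support := by
  by_contra hw
  have := hmax _ _ (p.cons h.symm) (hp.cons hw)
  rw [Walk.length_cons] at this
  omega

lemma mem_support_of_adj_of_mem_support [Finite V] (hdeg : ∀ v, (G.neighborSet v).ncard ≤ 2)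
    {u v x y : V} {p : G.Walk u v} (hp : p.IsPath)
    (hmax : ∀ (u' v' : V) (q : G.Walk u' v'), q.IsPath → q.length ≤ p.length)
    (hx : x ∈ p.support) (h : G.Adj x y) : y ∈ p.support := by
  obtain ⟨i, rfl, hi⟩ := Walk.mem_support_iff_exists_getVert.mp hx
  obtain rfl | hpos := Nat.eq_zero_or_pos i
  · exact mem_support_of_adj_start hp hmax (p.getVert_zero ▸ h)
  obtain rfl | hlt := hi.eq_or_lt
  · have hrev := mem_support_of_adj_start hp.reverse (by simpa using hmax) (p.getVert_length ▸ h)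
    simpa using hrev
  have hprev : G.Adj (p.getVert i) (p.getVert (i - 1)) := by
    have := p.adj_getVert_succ (i := i - 1) (by omega)
    rw [Nat.sub_add_cancel hpos] at this
    exact this.symm
  have hne : p.getVert (i - 1) ≠ p.getVert (i + 1) := fun heq ↦ by
    have := hp.getVert_injOn (hi.trans' (i.sub_le 1)) (Nat.succ_le_of_lt hlt) heq
    omega
  have hy : y ∈ G.neighborSet (p.getVert i) := h
  rw [neighborSet_eq_pair (hdeg _) hprev (p.adj_getVert_succ hlt) hne] at hy
  obtain rfl | rfl := hy <;> exact p.getVert_mem_support _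

lemma exists_isHamiltonian_of_connected [Finite V] [DecidableEq V] (hG : G.Connected)
    (hdeg : ∀ v, (G.neighborSet v).ncard ≤ 2) :
    ∃ (u v : V) (p : G.Walk u v), p.IsHamiltonian := by
  have := hG.nonempty
  obtain ⟨u, v, p, hp, hmax⟩ := Walk.exists_isPath_forall_isPath_length_le_length G
  refine ⟨u, v, p, hp.isHamiltonian_of_mem fun w ↦ ?_⟩
  by_contra hw
  obtain ⟨q⟩ := hG.preconnected u w
  obtain ⟨d, -, hd, hd'⟩ := q.exists_boundary_dart {x | x ∈ p.support} p.start_mem_support hw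
  exact hd' (mem_support_of_adj_of_mem_support hdeg hp hmax hd d.adj)

lemma pathGraph_le_comap_getVertEquiv [DecidableEq V] {u v : V} {p : G.Walk u v}
    (hp : p.IsHamiltonian) : pathGraph p.support.length ≤ G.comap hp.getVertEquiv := by
  have hsucc {i j : Fin p.support.length} (h : i.val + 1 = j.val) :
      G.Adj (p.getVert i) (p.getVert j) := by
    have hj : j.val < p.length + 1 := j.isLt.trans_eq p.length_support
    exact h ▸ p.adj_getVert_succ (by omega)
  intro i j hij
  rcases pathGraph_adj.mp hij with h | h
  exacts [hsucc h, (hsucc h).symm]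

lemma ncard_neighborSet_le_of_injective {V' : Type*} [Finite V'] {G' : SimpleGraph V'}
    (φ : G →g G') (hφ : Function.Injective φ) (v : V) :
    (G.neighborSet v).ncard ≤ (G'.neighborSet (φ v)).ncard :=
  Set.ncard_le_ncard_of_injOn φ (fun _ h ↦ φ.map_adj h) hφ.injOn

end MaxDegreeTwo

section Classification

lemma eq_of_forall_lt_adj_iff {V : Type*} [LinearOrder V] {G H : SimpleGraph V}
    (h : ∀ i j, i < j → (G.Adj i j ↔ H.Adj i j)) : G = H := by
  ext i j
  rcases lt_trichotomy i j with hij | rfl | hji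
  · exact h i j hij
  · simp
  · rw [G.adj_comm, H.adj_comm, h j i hji]

variable {n : ℕ} {G : SimpleGraph (Fin n)}

lemma cycleGraph_adj_iff_of_lt {i j : Fin n} (h : i < j) :
    (cycleGraph n).Adj i j ↔ i.val + 1 = j.val ∨ i.val = 0 ∧ j.val + 1 = n := by
  rw [cycleGraph_adj', Fin.coe_sub_iff_lt.mpr h, Fin.sub_val_of_le h.le]
  omega

lemma pathGraph_adj_of_interior (hle : pathGraph n ≤ G)
    (hdeg : ∀ v, (G.neighborSet v).ncard ≤ 2) {i j : Fin n} (hi : 0 < i.val) (hin : i.val + 1 < n)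
    (h : G.Adj i j) : (pathGraph n).Adj i j := by
  let a : Fin n := ⟨i - 1, by omega⟩
  let b : Fin n := ⟨i + 1, hin⟩
  have ha : (pathGraph n).Adj i a := pathGraph_adj.mpr (Or.inr (Nat.sub_add_cancel hi))
  have hb : (pathGraph n).Adj i b := pathGraph_adj.mpr (Or.inl rfl)
  have hab : a ≠ b := Fin.ne_of_val_ne (by simp only [a, b]; omega)
  have hj : j ∈ G.neighborSet i := h
  rw [neighborSet_eq_pair (hdeg i) (hle ha) (hle hb) hab] at hj
  obtain rfl | rfl := hj
  exacts [ha, hb]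

lemma pathGraph_adj_or_endpoints_of_lt (hle : pathGraph n ≤ G)
    (hdeg : ∀ v, (G.neighborSet v).ncard ≤ 2) {i j : Fin n} (hij : i < j) (h : G.Adj i j) :
    (pathGraph n).Adj i j ∨ i.val = 0 ∧ j.val + 1 = n := by
  by_contra! hcon
  by_cases hi : i.val = 0
  · exact hcon.1 (pathGraph_adj_of_interior hle hdeg (by omega)
      (by have := hcon.2 hi; omega) h.symm).symm
  · exact hcon.1 (pathGraph_adj_of_interior hle hdeg (by omega) (by omega) h)

theorem eq_pathGraph_or_eq_cycleGraph (hle : pathGraph n ≤ G)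
    (hdeg : ∀ v, (G.neighborSet v).ncard ≤ 2) :
    G = pathGraph n ∨ 3 ≤ n ∧ G = cycleGraph n := by
  by_cases hchord : ∃ i j, i < j ∧ G.Adj i j ∧ ¬ (pathGraph n).Adj i j
  · right
    obtain ⟨i, j, hij, hG, hP⟩ := hchord
    have hends : i.val = 0 ∧ j.val + 1 = n :=
      (pathGraph_adj_or_endpoints_of_lt hle hdeg hij hG).resolve_left hP
    rw [pathGraph_adj] at hP
    refine ⟨by omega, eq_of_forall_lt_adj_iff fun a b hab ↦ ?_⟩
    rw [cycleGraph_adj_iff_of_lt hab]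
    constructor
    · intro h
      have := pathGraph_adj_or_endpoints_of_lt hle hdeg hab h
      rw [pathGraph_adj] at this
      omega
    · rintro (h | ⟨ha, hb⟩)
      · exact hle (pathGraph_adj.mpr (Or.inl h))
      · obtain rfl : a = i := by omega
        obtain rfl : b = j := by omega
        exact hG
  · left
    push Not at hchord
    exact eq_of_forall_lt_adj_iff fun i j hij ↦ ⟨hchord i j hij, fun h ↦ hle h⟩

theorem exists_iso_pathGraph_or_cycleGraph {V : Type*} [Finite V] {G : SimpleGraph V}
    (hG : G.Connected) (hdeg : ∀ v, (G.neighborSet v).ncard ≤ 2) :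
    ∃ n, Nonempty (G ≃g pathGraph n) ∨ 3 ≤ n ∧ Nonempty (G ≃g cycleGraph n) := by
  classical
  obtain ⟨u, v, p, hp⟩ := exists_isHamiltonian_of_connected hG hdeg
  let e := Iso.comap hp.getVertEquiv G
  refine ⟨p.support.length, ?_⟩
  rcases eq_pathGraph_or_eq_cycleGraph (pathGraph_le_comap_getVertEquiv hp) fun i ↦
    (ncard_neighborSet_le_of_injective e.toHom e.injective i).trans (hdeg _) with h | ⟨hn, h⟩
  · exact Or.inl ⟨h ▸ e.symm⟩
  · exact Or.inr ⟨hn, ⟨h ▸ e.symm⟩⟩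

lemma exists_compIsPath_or_compIsCycle {V : Type*} [Finite V] {G : SimpleGraph V}
    (hdeg : ∀ v, (G.neighborSet v).ncard ≤ 2) (c : G.ConnectedComponent) :
    ∃ n, CompIsPath G c n ∨ CompIsCycle G c n :=
  exists_iso_pathGraph_or_cycleGraph c.connected_toSimpleGraph fun v ↦
    (ncard_neighborSet_le_of_injective (Embedding.induce c.supp).toHom
      Subtype.val_injective v).trans (hdeg v)

lemma le_copies_pathGraph_of_compIsCycle {V : Type*} [Fintype V] {G : SimpleGraph V}
    {c : G.ConnectedComponent} {k n : ℕ} (hk : 0 < k) (hkn : k < n) (hc : CompIsCycle G c n) :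
    n ≤ copies G (pathGraph k) := by
  obtain ⟨-, ⟨e⟩⟩ := hc
  calc n ≤ copies (cycleGraph n) (pathGraph k) := le_copies_cycleGraph_pathGraph hk hkn
    _ ≤ copies G (pathGraph k) :=
      copies_le_of_embedding ((Embedding.induce c.supp).comp e.symm.toEmbedding) _

end Classification

/-- Let `k ≥ 2` and let `G` have maximum degree at most 2 and exactly one
component that is a path with at least `k-1` vertices. If `s(G,P_k) ≤ k`, then no
component of `G` is a cycle with more than `k` vertices, and the unique path component
with at least `k-1` vertices has exactly `s(G,P_k) + k - 1` vertices. -/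
theorem stmt_18 {V : Type*} [Fintype V] (G : SimpleGraph V) (k : ℕ) (hk : 2 ≤ k)
    (hdeg : ∀ v, (G.neighborSet v).ncard ≤ 2)
    (huniq : ∃! c : G.ConnectedComponent, ∃ m, k - 1 ≤ m ∧ CompIsPath G c m)
    (hle : copies G (pathGraph k) ≤ k) :
    (∀ (c : G.ConnectedComponent) (m : ℕ), k < m → ¬ CompIsCycle G c m) ∧
    (∀ c : G.ConnectedComponent, (∃ m, k - 1 ≤ m ∧ CompIsPath G c m) →
      c.supp.ncard = copies G (pathGraph k) + k - 1) := by
  classical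
  have hk' : 0 < k := by omega
  have hcycle : ∀ (c : G.ConnectedComponent) (m : ℕ), k < m → ¬ CompIsCycle G c m :=
    fun c m hm hc ↦ (hle.trans_lt hm).not_ge (le_copies_pathGraph_of_compIsCycle hk' hm hc)
  refine ⟨hcycle, fun c hc ↦ ?_⟩
  have hother : ∀ d ≠ c, copies (G.induce d.supp) (pathGraph k) = 0 := by
    intro d hdc
    obtain ⟨n, hpath | ⟨hn, ⟨e⟩⟩⟩ := exists_compIsPath_or_compIsCycle hdeg d
    · have hnk : ¬ k - 1 ≤ n := fun h ↦ hdc (huniq.unique ⟨n, h, hpath⟩ hc)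
      rw [copies_congr hpath.some, copies_pathGraph_pathGraph n hk']
      omega
    · have hnk : n ≤ k := not_lt.mp fun h ↦ hcycle d n h ⟨hn, ⟨e⟩⟩
      rw [copies_congr e, copies_cycleGraph_pathGraph_eq_zero hn hnk]
  obtain ⟨m, hm, ⟨e⟩⟩ := hc
  have hcard : c.supp.ncard = m := (Nat.card_congr e.toEquiv).trans (Nat.card_fin m)
  rw [hcard, copies_eq_finsum_copies_induce_supp G (pathGraph_connected_of_pos hk'),
    finsum_eq_single _ c hother, copies_congr e, copies_pathGraph_pathGraph m hk']
  omega
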